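/- Let Ψ : ℝ^n → ℝ, let x, s ∈ ℝ^n, and let Δ ≥ 0, α, θ, ε_f, ξ, α_max > 0 with α ≤ α_max and ε_f < θξ/(4α_max). Suppose real numbers Ψ⁰, Ψˢ satisfy Ψ⁰ − Ψˢ ≥ θ·α·Δ, |Ψ(x) − Ψ⁰| ≤ ε_f·α²·‖d‖², |Ψ(x + s) − Ψˢ| ≤ ε_f·α²·‖d‖², and ‖d‖² ≤ ξ⁻¹·Δ. Then Ψ(x) − Ψ(x + s) ≥ (θ/2)·α·Δ. -/

import Mathlib

/-- Accurate estimates plus a successful stochastic line search imply true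
merit decrease: if `Ψ⁰ − Ψˢ ≥ θαΔ`, the estimates are `ε_f α²‖d‖²`-accurate,
`‖d‖² ≤ ξ⁻¹Δ`, `α ≤ α_max` and `ε_f < θξ/(4α_max)`, then
`Ψ(x) − Ψ(x+s) ≥ (θ/2)αΔ`. -/
theorem stmt_7 (n : ℕ) (Ψ : EuclideanSpace ℝ (Fin n) → ℝ)
    (x s d : EuclideanSpace ℝ (Fin n))
    (Δ α θ εf ξ αmax Ψ0 Ψs : ℝ)
    (hΔ : 0 ≤ Δ) (hα : 0 < α) (hθ : 0 < θ) (hεf : 0 < εf) (hξ : 0 < ξ)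
    (hαmax : 0 < αmax) (hααmax : α ≤ αmax)
    (hεsmall : εf < θ * ξ / (4 * αmax))
    (hls : Ψ0 - Ψs ≥ θ * α * Δ)
    (hacc0 : |Ψ x - Ψ0| ≤ εf * α ^ 2 * ‖d‖ ^ 2)
    (haccs : |Ψ (x + s) - Ψs| ≤ εf * α ^ 2 * ‖d‖ ^ 2)
    (hd : ‖d‖ ^ 2 ≤ ξ⁻¹ * Δ) :
    Ψ x - Ψ (x + s) ≥ (θ / 2) * α * Δ := by
  have hεα : εf * α ≤ θ * ξ / 4 := by
    have h : εf * (4 * αmax) < θ * ξ := (lt_div_iff₀ (by positivity)).1 hεsmall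
    have h' : εf * α ≤ εf * αmax := by gcongr
    linarith
  have herr : εf * α ^ 2 * ‖d‖ ^ 2 ≤ θ / 4 * α * Δ := calc
    εf * α ^ 2 * ‖d‖ ^ 2 = εf * α * (α * ‖d‖ ^ 2) := by ring
    _ ≤ θ * ξ / 4 * (α * (ξ⁻¹ * Δ)) := by gcongr
    _ = θ / 4 * α * Δ := by field_simp
  linarith [(abs_le.1 hacc0).1, (abs_le.1 haccs).2]
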